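/- The 15 degrees of freedom of the lowest-order normal-normal stress element are unisolvent for X_T: the linear map from X_T to ℝ⁶ × 𝕊 × ℝ⁶ sending τ to (i) the six edge moments ∫₀¹ n_iᵀ τ(γ_i(s)) n_i ds and ∫₀¹ n_iᵀ τ(γ_i(s)) n_i · s ds for i = 1,2,3, (ii) the matrix ∫_T τ(x) dx (entrywise Lebesgue integral over the triangle T), and (iii) the six moments ∫_T (div τ)(x)·v_k(x) dx for a basis v₁,…,v₆ of the space of affine maps ℝ² → ℝ², is a linear isomorphism. Equivalently, if τ ∈ X_T satisfies ∫₀¹ (n_iᵀ τ(γ_i(s)) n_i)·q(s) ds = 0 for every affine q : ℝ → ℝ and every i, ∫_T τ(x) dx = 0, and ∫_T (div τ)(x)·v(x) dx = 0 for every affine v : ℝ² → ℝ², then τ = 0. -/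

import Mathlib

open MeasureTheory Matrix

noncomputable section

/-- `γ_i(s) = (1-s)·x_{i+1} + s·x_{i+2}`, the parametrization of the edge `e_i`
of the triangle with vertices `x 0, x 1, x 2` (indices modulo 3). -/
def edgePt (x : Fin 3 → Fin 2 → ℝ) (i : Fin 3) (s : ℝ) : Fin 2 → ℝ :=
  (1 - s) • x (i + 1) + s • x (i + 2)

/-- `n i` is the outward unit normal of the triangle with vertices `x` on the edge
`e_i = [x_{i+1}, x_{i+2}]`: it is a unit vector, orthogonal to the edge, and points
away from the opposite vertex `x i`. -/
def IsOuterNormal (x n : Fin 3 → Fin 2 → ℝ) : Prop :=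
  ∀ i : Fin 3, n i ⬝ᵥ n i = 1 ∧ n i ⬝ᵥ (x (i + 2) - x (i + 1)) = 0 ∧
    0 < n i ⬝ᵥ (x (i + 1) - x i)

/-- A real-valued function on the plane given by a polynomial of total degree at most 2. -/
def IsPolyDeg2 (f : (Fin 2 → ℝ) → ℝ) : Prop :=
  ∃ p : MvPolynomial (Fin 2) ℝ, p.totalDegree ≤ 2 ∧ ∀ y, f y = MvPolynomial.eval y p

/-- Membership in the local space `X_T`: symmetric-matrix-valued, entries polynomials of
total degree at most 2, and the normal-normal trace on each edge is affine in the edge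
parameter. -/
def MemXT (x n : Fin 3 → Fin 2 → ℝ)
    (τ : (Fin 2 → ℝ) → Matrix (Fin 2) (Fin 2) ℝ) : Prop :=
  (∀ y, (τ y)ᵀ = τ y) ∧
  (∀ k l : Fin 2, IsPolyDeg2 fun y => τ y k l) ∧
  (∀ i : Fin 3, ∃ a b : ℝ, ∀ s : ℝ,
    n i ⬝ᵥ (τ (edgePt x i s)).mulVec (n i) = a * s + b)

/-- Row-wise divergence of a matrix field: `(div τ)_k = ∂₁ τ_{k1} + ∂₂ τ_{k2}`. -/
def matDiv (τ : (Fin 2 → ℝ) → Matrix (Fin 2) (Fin 2) ℝ) (y : Fin 2 → ℝ) : Fin 2 → ℝ :=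
  fun k => ∑ j : Fin 2, fderiv ℝ (fun z => τ z k j) y (Pi.single j 1)

/-- The closed triangle `T = conv{x 0, x 1, x 2}`. -/
def Tset (x : Fin 3 → Fin 2 → ℝ) : Set (Fin 2 → ℝ) :=
  convexHull ℝ {x 0, x 1, x 2}

def Quad (c : Fin 6 → ℝ) (s t : ℝ) : ℝ :=
  c 0 + c 1 * s + c 2 * t + c 3 * s ^ 2 + c 4 * (s * t) + c 5 * t ^ 2

def refTri : Set (ℝ × ℝ) := {p | 0 ≤ p.1 ∧ 0 ≤ p.2 ∧ p.1 + p.2 ≤ 1}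

lemma refTri_closed : IsClosed refTri := by
  have h1 : IsClosed {p : ℝ × ℝ | 0 ≤ p.1} := isClosed_le (by fun_prop) (by fun_prop)
  have h2 : IsClosed {p : ℝ × ℝ | 0 ≤ p.2} := isClosed_le (by fun_prop) (by fun_prop)
  have h3 : IsClosed {p : ℝ × ℝ | p.1 + p.2 ≤ 1} := isClosed_le (by fun_prop) (by fun_prop)
  exact h1.inter (h2.inter h3)

lemma refTri_compact : IsCompact refTri := by
  refine (isCompact_Icc (a := ((0:ℝ),(0:ℝ))) (b := (1,1))).of_isClosed_subset refTri_closed ?_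
  rintro ⟨s, t⟩ ⟨h1, h2, h3⟩
  simp only at h1 h2 h3
  exact ⟨⟨h1, h2⟩, ⟨by simp; linarith, by simp; linarith⟩⟩

lemma inner_int (c : Fin 6 → ℝ) (s b : ℝ) : ∫ t in (0:ℝ)..b, Quad c s t
    = (c 0 + c 1 * s + c 3 * s ^ 2) * b + (c 2 + c 4 * s) * (b ^ 2 / 2) + c 5 * (b ^ 3 / 3) := by
  have h : ∀ t ∈ Set.uIcc (0:ℝ) b, HasDerivAt (fun t => (c 0 + c 1 * s + c 3 * s ^ 2) * t + (c 2 + c 4 * s) * (t ^ 2 / 2) + c 5 * (t ^ 3 / 3)) (Quad c s t) t := by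
    intro t _
    have h1 := (hasDerivAt_id t).const_mul (c 0 + c 1 * s + c 3 * s ^ 2)
    have h2 := ((hasDerivAt_pow 2 t).div_const 2).const_mul (c 2 + c 4 * s)
    have h3 := ((hasDerivAt_pow 3 t).div_const 3).const_mul (c 5)
    refine ((h1.add h2).add h3).congr_deriv ?_
    simp [Quad]; ring
  rw [intervalIntegral.integral_eq_sub_of_hasDerivAt h]
  · simp
  · apply Continuous.intervalIntegrable; unfold Quad; fun_prop

lemma outer_int (c : Fin 6 → ℝ) : ∫ s in (0:ℝ)..1, ∫ t in (0:ℝ)..(1 - s), Quad c s t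
    = c 0 / 2 + c 1 / 6 + c 2 / 6 + c 3 / 12 + c 4 / 24 + c 5 / 12 := by
  simp_rw [inner_int]
  have h : ∀ s ∈ Set.uIcc (0:ℝ) 1, HasDerivAt (fun s => 
     (c 0 + c 2 / 2 + c 5 / 3) * s + (-c 0 + c 1 - c 2 + c 4 / 2 - c 5) * (s ^ 2 / 2)
     + (-c 1 + c 3 + c 2 / 2 - c 4 + c 5) * (s ^ 3 / 3) + (-c 3 + c 4 / 2 - c 5 / 3) * (s ^ 4 / 4))
     ((c 0 + c 1 * s + c 3 * s ^ 2) * (1 - s) + (c 2 + c 4 * s) * ((1 - s) ^ 2 / 2) + c 5 * ((1 - s) ^ 3 / 3)) s := by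
    intro t _
    have h1 := (hasDerivAt_id t).const_mul (c 0 + c 2 / 2 + c 5 / 3)
    have h2 := ((hasDerivAt_pow 2 t).div_const 2).const_mul (-c 0 + c 1 - c 2 + c 4 / 2 - c 5)
    have h3 := ((hasDerivAt_pow 3 t).div_const 3).const_mul (-c 1 + c 3 + c 2 / 2 - c 4 + c 5)
    have h4 := ((hasDerivAt_pow 4 t).div_const 4).const_mul (-c 3 + c 4 / 2 - c 5 / 3)
    refine (((h1.add h2).add h3).add h4).congr_deriv ?_
    simp; ring
  rw [intervalIntegral.integral_eq_sub_of_hasDerivAt h]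
  · norm_num; ring
  · apply Continuous.intervalIntegrable; fun_prop

lemma refTri_int (c : Fin 6 → ℝ) : ∫ p in refTri, Quad c p.1 p.2
    = c 0 / 2 + c 1 / 6 + c 2 / 6 + c 3 / 12 + c 4 / 24 + c 5 / 12 := by
  rw [← outer_int, ← integral_indicator refTri_closed.measurableSet, Measure.volume_eq_prod, integral_prod]
  · rw [intervalIntegral.integral_of_le zero_le_one, ← integral_Icc_eq_integral_Ioc, ← integral_indicator measurableSet_Icc]
    congr 1
    ext s
    by_cases hs : s ∈ Set.Icc (0:ℝ) 1
    · rw [Set.indicator_of_mem hs, intervalIntegral.integral_of_le (by linarith [hs.2]), ← integral_Icc_eq_integral_Ioc, ← integral_indicator measurableSet_Icc]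
      congr 1
      ext t
      by_cases ht : t ∈ Set.Icc (0:ℝ) (1 - s)
      · rw [Set.indicator_of_mem ht, Set.indicator_of_mem]
        exact ⟨hs.1, ht.1, by have := ht.2; simp; linarith⟩
      · rw [Set.indicator_of_notMem ht, Set.indicator_of_notMem]
        rintro ⟨h1, h2, h3⟩
        simp only at h1 h2 h3
        exact ht ⟨h2, by linarith⟩
    · rw [Set.indicator_of_notMem hs]
      convert integral_zero ℝ ℝ with t
      rw [Set.indicator_of_notMem]
      rintro ⟨h1, h2, h3⟩
      simp only at h1 h2 h3
      exact hs ⟨h1, by linarith⟩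
  · rw [← Measure.volume_eq_prod, integrable_indicator_iff refTri_closed.measurableSet]
    apply ContinuousOn.integrableOn_compact refTri_compact
    unfold Quad; fun_prop

lemma refTri_int2 (c : Fin 6 → ℝ) : ∫ y in {y : Fin 2 → ℝ | 0 ≤ y 0 ∧ 0 ≤ y 1 ∧ y 0 + y 1 ≤ 1}, Quad c (y 0) (y 1)
    = c 0 / 2 + c 1 / 6 + c 2 / 6 + c 3 / 12 + c 4 / 24 + c 5 / 12 := by
  rw [← refTri_int]
  exact (volume_preserving_finTwoArrow ℝ).setIntegral_preimage_emb (MeasurableEquiv.finTwoArrow).measurableEmbedding (fun p : ℝ × ℝ => Quad c p.1 p.2) refTri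

/-- determinant of the edge matrix -/
def dd (x : Fin 3 → Fin 2 → ℝ) : ℝ :=
  (x 1 0 - x 0 0) * (x 2 1 - x 0 1) - (x 1 1 - x 0 1) * (x 2 0 - x 0 0)

def pt (x : Fin 3 → Fin 2 → ℝ) (s t : ℝ) : Fin 2 → ℝ :=
  fun k => x 0 k + s * (x 1 k - x 0 k) + t * (x 2 k - x 0 k)

def BM (x : Fin 3 → Fin 2 → ℝ) : Matrix (Fin 2) (Fin 2) ℝ :=
  !![x 1 0 - x 0 0, x 2 0 - x 0 0; x 1 1 - x 0 1, x 2 1 - x 0 1]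

lemma pt_eq (x : Fin 3 → Fin 2 → ℝ) (y : Fin 2 → ℝ) :
    pt x (y 0) (y 1) = x 0 + Matrix.toLin' (BM x) y := by
  ext k
  fin_cases k <;> simp [pt, BM, Matrix.mulVec, dotProduct, Fin.sum_univ_two] <;> ring

lemma Tset_eq (x : Fin 3 → Fin 2 → ℝ) : Tset x =
    (fun y : Fin 2 → ℝ => pt x (y 0) (y 1)) '' {y : Fin 2 → ℝ | 0 ≤ y 0 ∧ 0 ≤ y 1 ∧ y 0 + y 1 ≤ 1} := by
  unfold Tset
  rw [convexHull_insert (by simp), convexHull_pair]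
  ext z
  simp only [convexJoin, segment, Set.mem_iUnion, Set.mem_image, Set.mem_ofPred_eq, Set.mem_singleton_iff]
  constructor
  · rintro ⟨_, rfl, w, ⟨a, b, ha, hb, hab, rfl⟩, c, d, hc, hd, hcd, rfl⟩
    refine ⟨![d * a, d * b], ⟨by simp; positivity, by simp; positivity, ?_⟩, ?_⟩
    · simp [← mul_add, hab]; linarith
    · ext k
      simp [pt]
      obtain rfl : c = 1 - d := by linarith
      obtain rfl : a = 1 - b := by linarith
      ring
  · rintro ⟨y, ⟨h1, h2, h3⟩, rfl⟩
    by_cases h : y 0 + y 1 = 0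
    · have e0 : y 0 = 0 := by linarith
      have e1 : y 1 = 0 := by linarith
      refine ⟨x 0, rfl, x 1, ⟨1, 0, by simp⟩, 1, 0, by simp, by simp, by simp, ?_⟩
      ext k; simp [pt, e0, e1]
    · have hp : 0 < y 0 + y 1 := lt_of_le_of_ne (by linarith) (Ne.symm h)
      refine ⟨x 0, rfl, _, ⟨y 0 / (y 0 + y 1), y 1 / (y 0 + y 1), by positivity, by positivity, by field_simp, rfl⟩, 1 - (y 0 + y 1), y 0 + y 1, by linarith, hp.le, by ring, ?_⟩
      ext k; simp [pt]; field_simp; ring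

lemma Tset_int (x : Fin 3 → Fin 2 → ℝ) (hD : dd x ≠ 0) (f : (Fin 2 → ℝ) → ℝ) (c : Fin 6 → ℝ)
    (hf : ∀ s t, f (pt x s t) = Quad c s t) (h0 : ∫ y in Tset x, f y = 0) :
    c 0 / 2 + c 1 / 6 + c 2 / 6 + c 3 / 12 + c 4 / 24 + c 5 / 12 = 0 := by
  set R : Set (Fin 2 → ℝ) := {y : Fin 2 → ℝ | 0 ≤ y 0 ∧ 0 ≤ y 1 ∧ y 0 + y 1 ≤ 1}
  have hR : MeasurableSet R := by
    apply IsClosed.measurableSet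
    have h1 : IsClosed {y : Fin 2 → ℝ | 0 ≤ y 0} := isClosed_le (by fun_prop) (by fun_prop)
    have h2 : IsClosed {y : Fin 2 → ℝ | 0 ≤ y 1} := isClosed_le (by fun_prop) (by fun_prop)
    have h3 : IsClosed {y : Fin 2 → ℝ | y 0 + y 1 ≤ 1} := isClosed_le (by fun_prop) (by fun_prop)
    exact h1.inter (h2.inter h3)
  have hdet : (BM x).det = dd x := by simp [BM, Matrix.det_fin_two, dd]; ring
  have hder : ∀ y ∈ R, HasFDerivWithinAt (fun y : Fin 2 → ℝ => pt x (y 0) (y 1))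
      (LinearMap.toContinuousLinearMap (Matrix.toLin' (BM x))) R y := by
    intro y _
    simp_rw [pt_eq]
    exact ((LinearMap.toContinuousLinearMap (Matrix.toLin' (BM x))).hasFDerivAt.const_add (x 0)).hasFDerivWithinAt
  have hinj : Set.InjOn (fun y : Fin 2 → ℝ => pt x (y 0) (y 1)) R := by
    intro y _ z _ h
    simp only [pt_eq] at h
    have h := add_left_cancel h
    have hu : IsUnit (BM x) := by rw [Matrix.isUnit_iff_isUnit_det, hdet]; exact hD.isUnit
    exact Matrix.mulVec_injective_of_isUnit hu (by simpa using h)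
  rw [Tset_eq, integral_image_eq_integral_abs_det_fderiv_smul volume hR hder hinj] at h0
  simp only [hf, smul_eq_mul] at h0
  rw [integral_const_mul, refTri_int2] at h0
  have : (LinearMap.toContinuousLinearMap (Matrix.toLin' (BM x))).det = dd x := by
    rw [← hdet]; simp [ContinuousLinearMap.det]
  rw [this] at h0
  exact (mul_eq_zero.mp h0).resolve_left (abs_ne_zero.mpr hD)

lemma poly_quad (f : (Fin 2 → ℝ) → ℝ) (hf : IsPolyDeg2 f) :
    ∃ c : Fin 6 → ℝ, ∀ y, f y = Quad c (y 0) (y 1) := by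
  obtain ⟨p, hp, h⟩ := hf
  have key : ∀ S : Finset (Fin 2 →₀ ℕ), (∀ m ∈ S, m 0 + m 1 ≤ 2) →
      ∃ c : Fin 6 → ℝ, ∀ y : Fin 2 → ℝ,
        ∑ m ∈ S, p.coeff m * (y 0 ^ m 0 * y 1 ^ m 1) = Quad c (y 0) (y 1) := by
    intro S
    induction S using Finset.induction_on with
    | empty => intro _; exact ⟨0, fun y => by simp [Quad]⟩
    | insert m S hm ih =>
      intro hS
      obtain ⟨c, hc⟩ := ih fun m' h' => hS m' (Finset.mem_insert_of_mem h')
      have hm2 := hS m (Finset.mem_insert_self _ _)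
      have : ∃ d : Fin 6 → ℝ, ∀ y : Fin 2 → ℝ,
          p.coeff m * (y 0 ^ m 0 * y 1 ^ m 1) = Quad d (y 0) (y 1) := by
        generalize p.coeff m = k
        generalize m 0 = a at hm2 ⊢
        generalize m 1 = b at hm2 ⊢
        have ha : a ≤ 2 := by omega
        have hb : b ≤ 2 := by omega
        interval_cases a <;> interval_cases b <;> first | omega | skip
        · exact ⟨![k, 0, 0, 0, 0, 0], fun y => by simp [Quad]⟩
        · exact ⟨![0, 0, k, 0, 0, 0], fun y => by simp [Quad]⟩
        · exact ⟨![0, 0, 0, 0, 0, k], fun y => by simp [Quad]⟩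
        · exact ⟨![0, k, 0, 0, 0, 0], fun y => by simp [Quad]⟩
        · exact ⟨![0, 0, 0, 0, k, 0], fun y => by simp [Quad]⟩
        · exact ⟨![0, 0, 0, k, 0, 0], fun y => by simp [Quad]⟩
      obtain ⟨d, hd⟩ := this
      refine ⟨d + c, fun y => ?_⟩
      rw [Finset.sum_insert hm, hc, hd]
      simp [Quad]; ring
  obtain ⟨c, hc⟩ := key p.support (by
    intro m hm
    have := (MvPolynomial.le_totalDegree hm).trans hp
    rw [Finsupp.sum_fintype _ _ (by simp), Fin.sum_univ_two] at this
    exact this)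
  refine ⟨c, fun y => ?_⟩
  rw [h, MvPolynomial.eval_eq', ← hc]
  simp [Fin.prod_univ_two]

lemma quad_pt (x : Fin 3 → Fin 2 → ℝ) (c : Fin 6 → ℝ) :
    ∃ d : Fin 6 → ℝ, ∀ s t, Quad c (pt x s t 0) (pt x s t 1) = Quad d s t := by
  refine ⟨![Quad c (x 0 0) (x 0 1),
    c 1 * (x 1 0 - x 0 0) + c 2 * (x 1 1 - x 0 1) + 2 * c 3 * x 0 0 * (x 1 0 - x 0 0)
      + c 4 * (x 0 0 * (x 1 1 - x 0 1) + x 0 1 * (x 1 0 - x 0 0))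
      + 2 * c 5 * x 0 1 * (x 1 1 - x 0 1),
    c 1 * (x 2 0 - x 0 0) + c 2 * (x 2 1 - x 0 1) + 2 * c 3 * x 0 0 * (x 2 0 - x 0 0)
      + c 4 * (x 0 0 * (x 2 1 - x 0 1) + x 0 1 * (x 2 0 - x 0 0))
      + 2 * c 5 * x 0 1 * (x 2 1 - x 0 1),
    c 3 * (x 1 0 - x 0 0) ^ 2 + c 4 * (x 1 0 - x 0 0) * (x 1 1 - x 0 1)
      + c 5 * (x 1 1 - x 0 1) ^ 2,
    2 * c 3 * (x 1 0 - x 0 0) * (x 2 0 - x 0 0)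
      + c 4 * ((x 1 0 - x 0 0) * (x 2 1 - x 0 1) + (x 1 1 - x 0 1) * (x 2 0 - x 0 0))
      + 2 * c 5 * (x 1 1 - x 0 1) * (x 2 1 - x 0 1),
    c 3 * (x 2 0 - x 0 0) ^ 2 + c 4 * (x 2 0 - x 0 0) * (x 2 1 - x 0 1)
      + c 5 * (x 2 1 - x 0 1) ^ 2], fun s t => ?_⟩
  simp [Quad, pt]
  ring

/-- first barycentric coordinate -/
def lamA (x : Fin 3 → Fin 2 → ℝ) (z : Fin 2 → ℝ) : ℝ :=
  ((z 0 - x 0 0) * (x 2 1 - x 0 1) - (z 1 - x 0 1) * (x 2 0 - x 0 0)) / dd x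

/-- second barycentric coordinate -/
def lamB (x : Fin 3 → Fin 2 → ℝ) (z : Fin 2 → ℝ) : ℝ :=
  ((x 1 0 - x 0 0) * (z 1 - x 0 1) - (x 1 1 - x 0 1) * (z 0 - x 0 0)) / dd x

lemma lamA_pt (x : Fin 3 → Fin 2 → ℝ) (hD : dd x ≠ 0) (s t : ℝ) : lamA x (pt x s t) = s := by
  unfold lamA; rw [div_eq_iff hD]; simp only [pt, dd]; ring

lemma lamB_pt (x : Fin 3 → Fin 2 → ℝ) (hD : dd x ≠ 0) (s t : ℝ) : lamB x (pt x s t) = t := by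
  unfold lamB; rw [div_eq_iff hD]; simp only [pt, dd]; ring

lemma pt_lam (x : Fin 3 → Fin 2 → ℝ) (hD : dd x ≠ 0) (z : Fin 2 → ℝ) :
    pt x (lamA x z) (lamB x z) = z := by
  have h : ∀ k, dd x * pt x (lamA x z) (lamB x z) k = dd x * z k := by
    intro k
    have h1 : dd x * lamA x z = (z 0 - x 0 0) * (x 2 1 - x 0 1) - (z 1 - x 0 1) * (x 2 0 - x 0 0) := by
      unfold lamA; field_simp
    have h2 : dd x * lamB x z = (x 1 0 - x 0 0) * (z 1 - x 0 1) - (x 1 1 - x 0 1) * (z 0 - x 0 0) := by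
      unfold lamB; field_simp
    have : dd x * pt x (lamA x z) (lamB x z) k = dd x * x 0 k
        + (dd x * lamA x z) * (x 1 k - x 0 k) + (dd x * lamB x z) * (x 2 k - x 0 k) := by
      simp only [pt]; ring
    rw [this, h1, h2]
    fin_cases k <;> simp [dd] <;> ring
  ext k
  exact mul_left_cancel₀ hD (h k)

lemma fderiv_quad (x : Fin 3 → Fin 2 → ℝ) (hD : dd x ≠ 0) (f : (Fin 2 → ℝ) → ℝ) (c : Fin 6 → ℝ)
    (hf : ∀ s t, f (pt x s t) = Quad c s t) (s t : ℝ) (v : Fin 2 → ℝ) :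
    fderiv ℝ f (pt x s t) v =
      (c 1 + 2 * c 3 * s + c 4 * t) * ((v 0 * (x 2 1 - x 0 1) - v 1 * (x 2 0 - x 0 0)) / dd x)
      + (c 2 + c 4 * s + 2 * c 5 * t)
        * (((x 1 0 - x 0 0) * v 1 - (x 1 1 - x 0 1) * v 0) / dd x) := by
  have hf' : f = fun z => Quad c (lamA x z) (lamB x z) := by
    ext z; rw [← hf, pt_lam x hD]
  have hdiff : DifferentiableAt ℝ f (pt x s t) := by
    rw [hf']; unfold Quad lamA lamB; fun_prop
  rw [← hdiff.lineDeriv_eq_fderiv, lineDeriv]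
  set a := (v 0 * (x 2 1 - x 0 1) - v 1 * (x 2 0 - x 0 0)) / dd x with ha
  set b := ((x 1 0 - x 0 0) * v 1 - (x 1 1 - x 0 1) * v 0) / dd x with hb
  have h1 : ∀ r, lamA x (pt x s t + r • v) = s + r * a := by
    intro r
    conv_rhs => rw [← lamA_pt x hD s t]
    rw [ha]; simp only [lamA, Pi.add_apply, Pi.smul_apply, smul_eq_mul]; ring
  have h2 : ∀ r, lamB x (pt x s t + r • v) = t + r * b := by
    intro r
    conv_rhs => rw [← lamB_pt x hD s t]
    rw [hb]; simp only [lamB, Pi.add_apply, Pi.smul_apply, smul_eq_mul]; ring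
  have h3 : (fun r => f (pt x s t + r • v)) = fun r => Quad c s t
      + ((c 1 + 2 * c 3 * s + c 4 * t) * a + (c 2 + c 4 * s + 2 * c 5 * t) * b) * r
      + (c 3 * a ^ 2 + c 4 * a * b + c 5 * b ^ 2) * r ^ 2 := by
    ext r
    rw [hf']; simp only [h1, h2, Quad]; ring
  rw [h3]
  apply HasDerivAt.deriv
  have d1 := ((hasDerivAt_id (0:ℝ)).const_mul
    ((c 1 + 2 * c 3 * s + c 4 * t) * a + (c 2 + c 4 * s + 2 * c 5 * t) * b)).const_add (Quad c s t)
  have d2 := (hasDerivAt_pow 2 (0:ℝ)).const_mul (c 3 * a ^ 2 + c 4 * a * b + c 5 * b ^ 2)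
  refine (d1.add d2).congr_deriv ?_
  simp

lemma affine_moments (a b : ℝ)
    (h : ∀ q : ℝ → ℝ, (∃ a b : ℝ, ∀ s, q s = a * s + b) →
      (∫ s in (0:ℝ)..1, (a * s + b) * q s) = 0) : a = 0 ∧ b = 0 := by
  have key : ∀ p q : ℝ, (∫ s in (0:ℝ)..1, (a * s + b) * (p * s + q)) =
      a * p / 3 + (a * q + b * p) / 2 + b * q := by
    intro p q
    have hd : ∀ s ∈ Set.uIcc (0:ℝ) 1, HasDerivAt
        (fun s => (b * q) * s + (a * q + b * p) * (s ^ 2 / 2) + (a * p) * (s ^ 3 / 3))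
        ((a * s + b) * (p * s + q)) s := by
      intro t _
      have h1 := (hasDerivAt_id t).const_mul (b * q)
      have h2 := ((hasDerivAt_pow 2 t).div_const 2).const_mul (a * q + b * p)
      have h3 := ((hasDerivAt_pow 3 t).div_const 3).const_mul (a * p)
      refine ((h1.add h2).add h3).congr_deriv ?_
      simp; ring
    rw [intervalIntegral.integral_eq_sub_of_hasDerivAt hd]
    · norm_num; ring
    · apply Continuous.intervalIntegrable; fun_prop
  have e1 := h (fun s => 0 * s + 1) ⟨0, 1, fun s => rfl⟩
  have e2 := h (fun s => 1 * s + 0) ⟨1, 0, fun s => rfl⟩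
  rw [key] at e1 e2
  constructor <;> linarith

lemma dd_ne (x n : Fin 3 → Fin 2 → ℝ) (hn : IsOuterNormal x n) : dd x ≠ 0 := by
  intro hD
  obtain ⟨-, p1, q1⟩ := hn 1
  obtain ⟨-, p2, q2⟩ := hn 2
  have e1 : (1 : Fin 3) + 1 = 2 := rfl
  have e2 : (1 : Fin 3) + 2 = 0 := rfl
  have e3 : (2 : Fin 3) + 1 = 0 := rfl
  have e4 : (2 : Fin 3) + 2 = 1 := rfl
  simp only [e1, e2, e3, e4, dotProduct, Fin.sum_univ_two, Pi.sub_apply] at p1 q1 p2 q2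
  unfold dd at hD
  have u0 : (n 2 0 * (x 0 0 - x 2 0) + n 2 1 * (x 0 1 - x 2 1)) * (x 1 0 - x 0 0) = 0 := by
    linear_combination (x 0 0 - x 2 0) * p2 - n 2 1 * hD
  have u1 : (n 2 0 * (x 0 0 - x 2 0) + n 2 1 * (x 0 1 - x 2 1)) * (x 1 1 - x 0 1) = 0 := by
    linear_combination (x 0 1 - x 2 1) * p2 + n 2 0 * hD
  have u0' := (mul_eq_zero.mp u0).resolve_left q2.ne'
  have u1' := (mul_eq_zero.mp u1).resolve_left q2.ne'
  have : n 1 0 * (x 2 0 - x 1 0) + n 1 1 * (x 2 1 - x 1 1) = 0 := by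
    linear_combination -p1 - n 1 0 * u0' - n 1 1 * u1'
  linarith

/-- The purely linear core on the reference triangle. -/
lemma core (A B C : Fin 6 → ℝ)
    (hA : ∀ r, Quad A 0 (1 - r) = 0) (hC : ∀ r, Quad C r 0 = 0)
    (hS : ∀ r, Quad A (1 - r) r + 2 * Quad B (1 - r) r + Quad C (1 - r) r = 0)
    (iA : A 0 / 2 + A 1 / 6 + A 2 / 6 + A 3 / 12 + A 4 / 24 + A 5 / 12 = 0)
    (iB : B 0 / 2 + B 1 / 6 + B 2 / 6 + B 3 / 12 + B 4 / 24 + B 5 / 12 = 0)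
    (iC : C 0 / 2 + C 1 / 6 + C 2 / 6 + C 3 / 12 + C 4 / 24 + C 5 / 12 = 0)
    (d1 : A 1 + B 2 = 0) (d2 : 2 * A 3 + B 4 = 0) (d3 : A 4 + 2 * B 5 = 0)
    (d4 : B 1 + C 2 = 0) (d5 : 2 * B 3 + C 4 = 0) (d6 : B 4 + 2 * C 5 = 0) :
    A = 0 ∧ B = 0 ∧ C = 0 := by
  have a0 := hA 1
  have a1 := hA 0
  have a2 := hA 2
  have c0 := hC 0
  have c1 := hC 1
  have c2 := hC (-1)
  have s0 := hS 0
  have s1 := hS 1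
  have s2 := hS (-1)
  norm_num [Quad] at a0 a1 a2 c0 c1 c2 s0 s1 s2
  refine ⟨?_, ?_, ?_⟩ <;> ext i <;> fin_cases i <;> simp <;> linarith

/-- Unisolvency of the 15 degrees of freedom for `X_T`: if `τ ∈ X_T` has vanishing
edge normal-normal moments against affine polynomials, vanishing entrywise integral over
the triangle, and vanishing moments of its divergence against affine vector fields,
then `τ = 0`. -/
theorem dofs_unisolvent
    (x n : Fin 3 → Fin 2 → ℝ)
    (hx : AffineIndependent ℝ x)
    (hn : IsOuterNormal x n)
    (τ : (Fin 2 → ℝ) → Matrix (Fin 2) (Fin 2) ℝ)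
    (hτ : MemXT x n τ)
    (hdof1 : ∀ i : Fin 3, ∀ q : ℝ → ℝ, (∃ a b : ℝ, ∀ s, q s = a * s + b) →
      (∫ s in (0:ℝ)..1, (n i ⬝ᵥ (τ (edgePt x i s)).mulVec (n i)) * q s) = 0)
    (hdof2 : ∀ k l : Fin 2, (∫ y in Tset x, τ y k l) = 0)
    (hdof3 : ∀ v : (Fin 2 → ℝ) → Fin 2 → ℝ,
      (∃ (A : Matrix (Fin 2) (Fin 2) ℝ) (b : Fin 2 → ℝ), ∀ y, v y = A.mulVec y + b) →
      (∫ y in Tset x, matDiv τ y ⬝ᵥ v y) = 0) :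
    ∀ y, τ y = 0 := by

  classical
  obtain ⟨hsym, hpoly, haff⟩ := hτ
  have hD : dd x ≠ 0 := dd_ne x n hn
  -- coefficients of the entries in reference coordinates
  have hcoef : ∀ k l : Fin 2, ∃ c : Fin 6 → ℝ, ∀ s t, τ (pt x s t) k l = Quad c s t := by
    intro k l
    obtain ⟨c, hc⟩ := poly_quad _ (hpoly k l)
    obtain ⟨d, hd⟩ := quad_pt x c
    exact ⟨d, fun s t => by rw [← hd, ← hc]⟩
  obtain ⟨P, hP⟩ := hcoef 0 0
  obtain ⟨Q, hQ⟩ := hcoef 0 1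
  obtain ⟨R, hR⟩ := hcoef 1 1
  have hsy : ∀ y, τ y 1 0 = τ y 0 1 := fun y => congrFun (congrFun (hsym y) 0) 1
  have hQ' : ∀ s t, τ (pt x s t) 1 0 = Quad Q s t := fun s t => by rw [hsy, hQ]
  have jP := Tset_int x hD _ P hP (hdof2 0 0)
  have jQ := Tset_int x hD _ Q hQ (hdof2 0 1)
  have jR := Tset_int x hD _ R hR (hdof2 1 1)
  obtain ⟨u0, hu0⟩ : ∃ r, r = x 1 0 - x 0 0 := ⟨_, rfl⟩
  obtain ⟨u1, hu1⟩ : ∃ r, r = x 1 1 - x 0 1 := ⟨_, rfl⟩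
  obtain ⟨w0, hw0⟩ : ∃ r, r = x 2 0 - x 0 0 := ⟨_, rfl⟩
  obtain ⟨w1, hw1⟩ : ∃ r, r = x 2 1 - x 0 1 := ⟨_, rfl⟩
  obtain ⟨D, hDD⟩ : ∃ r, r = dd x := ⟨_, rfl⟩
  have hDe : D = u0 * w1 - u1 * w0 := by rw [hDD, dd, hu0, hu1, hw0, hw1]
  have hD0 : D ≠ 0 := hDD ▸ hD
  -- Piola transformed tensor
  obtain ⟨A, hA⟩ : ∃ A : Fin 6 → ℝ, ∀ i, A i =
      (w1 ^ 2 * P i - 2 * w0 * w1 * Q i + w0 ^ 2 * R i) / D ^ 2 := ⟨_, fun i => rfl⟩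
  obtain ⟨B, hB⟩ : ∃ B : Fin 6 → ℝ, ∀ i, B i =
      (-(u1 * w1) * P i + (u0 * w1 + u1 * w0) * Q i - u0 * w0 * R i) / D ^ 2 := ⟨_, fun i => rfl⟩
  obtain ⟨C, hC⟩ : ∃ C : Fin 6 → ℝ, ∀ i, C i =
      (u1 ^ 2 * P i - 2 * u0 * u1 * Q i + u0 ^ 2 * R i) / D ^ 2 := ⟨_, fun i => rfl⟩
  have eP : ∀ i, P i = u0 ^ 2 * A i + 2 * u0 * w0 * B i + w0 ^ 2 * C i := by
    intro i; rw [hA, hB, hC]; field_simp; rw [hDe]; ring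
  have eQ : ∀ i, Q i = u0 * u1 * A i + (u0 * w1 + u1 * w0) * B i + w0 * w1 * C i := by
    intro i; rw [hA, hB, hC]; field_simp; rw [hDe]; ring
  have eR : ∀ i, R i = u1 ^ 2 * A i + 2 * u1 * w1 * B i + w1 ^ 2 * C i := by
    intro i; rw [hA, hB, hC]; field_simp; rw [hDe]; ring
  have iA : A 0 / 2 + A 1 / 6 + A 2 / 6 + A 3 / 12 + A 4 / 24 + A 5 / 12 = 0 := by
    simp only [hA]
    linear_combination (w1 ^ 2 / D ^ 2) * jP - (2 * w0 * w1 / D ^ 2) * jQ + (w0 ^ 2 / D ^ 2) * jR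
  have iB : B 0 / 2 + B 1 / 6 + B 2 / 6 + B 3 / 12 + B 4 / 24 + B 5 / 12 = 0 := by
    simp only [hB]
    linear_combination (-(u1 * w1) / D ^ 2) * jP + ((u0 * w1 + u1 * w0) / D ^ 2) * jQ
      - (u0 * w0 / D ^ 2) * jR
  have iC : C 0 / 2 + C 1 / 6 + C 2 / 6 + C 3 / 12 + C 4 / 24 + C 5 / 12 = 0 := by
    simp only [hC]
    linear_combination (u1 ^ 2 / D ^ 2) * jP - (2 * u0 * u1 / D ^ 2) * jQ + (u0 ^ 2 / D ^ 2) * jR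
  -- normal-normal components
  have hnn : ∀ (m : Fin 2 → ℝ) (s t : ℝ), m ⬝ᵥ (τ (pt x s t)).mulVec m =
      (m 0 * u0 + m 1 * u1) ^ 2 * Quad A s t
      + 2 * (m 0 * u0 + m 1 * u1) * (m 0 * w0 + m 1 * w1) * Quad B s t
      + (m 0 * w0 + m 1 * w1) ^ 2 * Quad C s t := by
    intro m s t
    simp only [dotProduct, Matrix.mulVec, Fin.sum_univ_two, hP, hQ, hQ', hR]
    simp only [Quad, eP, eQ, eR]
    ring
  have hzero : ∀ i s, n i ⬝ᵥ (τ (edgePt x i s)).mulVec (n i) = 0 := by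
    intro i s
    obtain ⟨a, b, hab⟩ := haff i
    have h := hdof1 i
    simp only [hab] at h
    obtain ⟨rfl, rfl⟩ := affine_moments a b h
    rw [hab]; ring
  have e1 : (1 : Fin 3) + 1 = 2 := rfl
  have e2 : (1 : Fin 3) + 2 = 0 := rfl
  have e3 : (2 : Fin 3) + 1 = 0 := rfl
  have e4 : (2 : Fin 3) + 2 = 1 := rfl
  have e5 : (0 : Fin 3) + 1 = 1 := rfl
  have e6 : (0 : Fin 3) + 2 = 2 := rfl
  have p0 : ∀ r, edgePt x 0 r = pt x (1 - r) r := by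
    intro r; ext k; simp only [edgePt, pt, e5, e6, Pi.add_apply, Pi.smul_apply, smul_eq_mul]; ring
  have p1 : ∀ r, edgePt x 1 r = pt x 0 (1 - r) := by
    intro r; ext k; simp only [edgePt, pt, e1, e2, Pi.add_apply, Pi.smul_apply, smul_eq_mul]; ring
  have p2 : ∀ r, edgePt x 2 r = pt x r 0 := by
    intro r; ext k; simp only [edgePt, pt, e3, e4, Pi.add_apply, Pi.smul_apply, smul_eq_mul]; ring
  obtain ⟨-, g0, k0⟩ := hn 0
  obtain ⟨-, g1, k1⟩ := hn 1
  obtain ⟨-, g2, k2⟩ := hn 2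
  simp only [e1, e2, e3, e4, e5, e6, dotProduct, Fin.sum_univ_two, Pi.sub_apply] at g0 k0 g1 k1 g2 k2
  have zA : ∀ r, Quad A 0 (1 - r) = 0 := by
    intro r
    have h := hzero 1 r
    have hw : n 1 0 * w0 + n 1 1 * w1 = 0 := by rw [hw0, hw1]; linarith
    have hu : n 1 0 * u0 + n 1 1 * u1 ≠ 0 := by
      rw [hu0, hu1]; intro h'; linarith
    rw [p1, hnn, hw] at h
    have h : (n 1 0 * u0 + n 1 1 * u1) ^ 2 * Quad A 0 (1 - r) = 0 := by linarith
    exact (mul_eq_zero.mp h).resolve_left (pow_ne_zero 2 hu)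
  have zC : ∀ r, Quad C r 0 = 0 := by
    intro r
    have h := hzero 2 r
    have hu : n 2 0 * u0 + n 2 1 * u1 = 0 := by rw [hu0, hu1]; linarith
    have hw : n 2 0 * w0 + n 2 1 * w1 ≠ 0 := by
      rw [hw0, hw1]; intro h'; linarith
    rw [p2, hnn, hu] at h
    have h : (n 2 0 * w0 + n 2 1 * w1) ^ 2 * Quad C r 0 = 0 := by linarith
    exact (mul_eq_zero.mp h).resolve_left (pow_ne_zero 2 hw)
  have zS : ∀ r, Quad A (1 - r) r + 2 * Quad B (1 - r) r + Quad C (1 - r) r = 0 := by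
    intro r
    have h := hzero 0 r
    have hw : n 0 0 * w0 + n 0 1 * w1 = n 0 0 * u0 + n 0 1 * u1 := by
      rw [hw0, hw1, hu0, hu1]; linarith
    have hu : n 0 0 * u0 + n 0 1 * u1 ≠ 0 := by
      rw [hu0, hu1]; intro h'; linarith
    rw [p0, hnn, hw] at h
    have h : (n 0 0 * u0 + n 0 1 * u1) ^ 2 *
      (Quad A (1 - r) r + 2 * Quad B (1 - r) r + Quad C (1 - r) r) = 0 := by linarith
    exact (mul_eq_zero.mp h).resolve_left (pow_ne_zero 2 hu)
  -- divergence
  have hdiv0 : ∀ s t, matDiv τ (pt x s t) 0 =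
      (A 1 + B 2 + (2 * A 3 + B 4) * s + (A 4 + 2 * B 5) * t) * u0
      + (B 1 + C 2 + (2 * B 3 + C 4) * s + (B 4 + 2 * C 5) * t) * w0 := by
    intro s t
    simp only [matDiv, Fin.sum_univ_two]
    rw [fderiv_quad x hD _ P hP, fderiv_quad x hD _ Q hQ]
    simp only [← hu0, ← hu1, ← hw0, ← hw1, ← hDD, eP, eQ, Pi.single_eq_same, ne_eq, zero_ne_one,
      one_ne_zero, not_false_eq_true, Pi.single_eq_of_ne]
    field_simp
    rw [hDe]; ring
  have hdiv1 : ∀ s t, matDiv τ (pt x s t) 1 =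
      (A 1 + B 2 + (2 * A 3 + B 4) * s + (A 4 + 2 * B 5) * t) * u1
      + (B 1 + C 2 + (2 * B 3 + C 4) * s + (B 4 + 2 * C 5) * t) * w1 := by
    intro s t
    simp only [matDiv, Fin.sum_univ_two]
    rw [fderiv_quad x hD _ Q hQ', fderiv_quad x hD _ R hR]
    simp only [← hu0, ← hu1, ← hw0, ← hw1, ← hDD, eR, eQ, Pi.single_eq_same, ne_eq, zero_ne_one,
      one_ne_zero, not_false_eq_true, Pi.single_eq_of_ne]
    field_simp
    rw [hDe]; ring
  have hmom : ∀ a b c f g : ℝ,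
      (∫ y in Tset x, matDiv τ y ⬝ᵥ ((a + b * lamA x y + c * lamB x y) • ![f, g])) = 0 := by
    intro a b c f g
    apply hdof3
    let l0 : ℝ := b * w1 / D - c * u1 / D
    let l1 : ℝ := c * u0 / D - b * w0 / D
    let l : ℝ := a - l0 * x 0 0 - l1 * x 0 1
    refine ⟨!![f * l0, f * l1; g * l0, g * l1], ![f * l, g * l], fun y => ?_⟩
    have hl : a + b * lamA x y + c * lamB x y = l0 * y 0 + l1 * y 1 + l := by
      simp only [lamA, lamB, l, l0, l1, ← hu0, ← hu1, ← hw0, ← hw1, ← hDD]; ring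
    rw [hl]
    ext k
    fin_cases k <;> simp [Matrix.mulVec, dotProduct, Fin.sum_univ_two] <;> ring
  have hgen : ∀ d0 d1 d2 f g : ℝ, (∀ s t, matDiv τ (pt x s t) 0 * f + matDiv τ (pt x s t) 1 * g
      = D * (d0 + d1 * s + d2 * t)) → d0 = 0 ∧ d1 = 0 ∧ d2 = 0 := by
    intro d0 d1 d2 f g h
    have key : ∀ a b c : ℝ, D * (a * d0 / 2 + (a * d1 + b * d0) / 6 + (a * d2 + c * d0) / 6
        + b * d1 / 12 + (b * d2 + c * d1) / 24 + c * d2 / 12) = 0 := by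
      intro a b c
      have := Tset_int x hD _ ![D * (a * d0), D * (a * d1 + b * d0), D * (a * d2 + c * d0),
        D * (b * d1), D * (b * d2 + c * d1), D * (c * d2)] (fun s t => ?_) (hmom a b c f g)
      · simp at this
        linarith
      · rw [lamA_pt x hD, lamB_pt x hD]
        simp [dotProduct, Fin.sum_univ_two, Quad]
        linear_combination (a + b * s + c * t) * h s t
    have h1 := (mul_eq_zero.mp (key 1 0 0)).resolve_left hD0
    have h2 := (mul_eq_zero.mp (key 0 1 0)).resolve_left hD0
    have h3 := (mul_eq_zero.mp (key 0 0 1)).resolve_left hD0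
    refine ⟨?_, ?_, ?_⟩ <;> linarith
  obtain ⟨m1, m2, m3⟩ := hgen (A 1 + B 2) (2 * A 3 + B 4) (A 4 + 2 * B 5) w1 (-w0) (by
    intro s t; rw [hdiv0, hdiv1, hDe]; ring)
  obtain ⟨m4, m5, m6⟩ := hgen (B 1 + C 2) (2 * B 3 + C 4) (B 4 + 2 * C 5) (-u1) u0 (by
    intro s t; rw [hdiv0, hdiv1, hDe]; ring)
  obtain ⟨rfl, rfl, rfl⟩ := core A B C zA zC zS iA iB iC m1 m2 m3 m4 m5 m6
  intro y
  rw [← pt_lam x hD y]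
  ext k l
  fin_cases k <;> fin_cases l <;> simp [hP, hQ, hQ', hR, Quad, eP, eQ, eR]
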